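/- Fix B > 1 and let 𝒟_{Box,Lip,B} be the set of laws on ℝ^d whose densities are 1-Lipschitz, supported on [−1,1]^d, and take values in [1/B, B]. There exists an estimator sequence 𝓔 such that for every P ∈ 𝒟_{Box,Lip,B}, the prediction regret satisfies ρ_t(𝓔;p)/t → 0 P^∞-almost surely as t → ∞; consequently, for every c > 0, 𝒟_{Box,Lip,B} ⊆ 𝒬(𝓔; c), i.e., for every non-log-concave P ∈ 𝒟_{Box,Lip,B} with log-concave KL-projection L*, P^∞( limsup_{t→∞} ρ_t(𝓔;p)/(t·d_H²(p, L*)) ≤ c ) = 1. -/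

import Mathlib

open MeasureTheory ProbabilityTheory Filter Finset Matrix
open scoped Classical

noncomputable section

namespace SeqTest

/-- `ℝ^d`. -/
abbrev RV (d : ℕ) := Fin d → ℝ

/-- The sequence space `Ω = (ℝ^d)^ℕ`. -/
abbrev Seq (d : ℕ) := ℕ → RV d

variable (d : ℕ)


/-- The first `t` coordinates of a sequence. -/
def prefixMap (t : ℕ) : Seq d → (Fin t → RV d) := fun ω s => ω s

/-- The law of the first `t` coordinates under a sequential law `μ`. -/
def prefixLaw (μ : Measure (Seq d)) (t : ℕ) : Measure (Fin t → RV d) :=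
  μ.map (prefixMap d t)

/-- The natural filtration of the coordinate process: `ℱ t = σ(X_0, …, X_{t-1})`. -/
def F : Filtration ℕ (inferInstance : MeasurableSpace (Seq d)) where
  seq t := ⨆ s ∈ Finset.range t, MeasurableSpace.comap (fun ω : Seq d => ω s) inferInstance
  mono' := by
    intro i j hij
    exact biSup_mono fun s hs => Finset.mem_range.mpr
      (lt_of_lt_of_le (Finset.mem_range.mp hs) hij)
  le' := by
    intro t
    refine iSup₂_le fun s _ => ?_
    exact measurable_iff_comap_le.mp (measurable_pi_apply s)

/-- Local absolute continuity of sequential laws: every prefix law of `μ` is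
absolutely continuous w.r.t. the corresponding prefix law of `Γ`. -/
def LocAC (μ Γ : Measure (Seq d)) : Prop := ∀ t, prefixLaw d μ t ≪ prefixLaw d Γ t

/-- The density (likelihood-ratio) process `Z_t^μ = d(μ|_t)/d(Γ|_t)` evaluated along the path. -/
def Z (μ Γ : Measure (Seq d)) (t : ℕ) (ω : Seq d) : ℝ :=
  ((prefixLaw d μ t).rnDeriv (prefixLaw d Γ t) (prefixMap d t ω)).toReal

/-- The standard Gaussian measure on `ℝ^d`. -/
def stdGaussian : Measure (RV d) := Measure.pi fun _ => gaussianReal 0 1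

/-- `Γ` is the law of an i.i.d. sequence of standard Gaussians: characterized through its
finite-dimensional rectangle probabilities. -/
def IsGamma (Γ : Measure (Seq d)) : Prop :=
  IsProbabilityMeasure Γ ∧
    ∀ (t : ℕ) (A : Fin t → Set (RV d)), (∀ s, MeasurableSet (A s)) →
      prefixLaw d Γ t (Set.univ.pi A) = ∏ s, stdGaussian d (A s)

/-- `M` is a nonnegative supermartingale for the sequential law `μ`
(w.r.t. the natural filtration). -/
def IsNSM (μ : Measure (Seq d)) (M : ℕ → Seq d → ℝ) : Prop :=
  (∀ t ω, 0 ≤ M t ω) ∧ Supermartingale M (F d) μ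

/-- `M` is a nonnegative martingale for the sequential law `μ`. -/
def IsNM (μ : Measure (Seq d)) (M : ℕ → Seq d → ℝ) : Prop :=
  (∀ t ω, 0 ≤ M t ω) ∧ Martingale M (F d) μ


/-- `R` is the `(s,h)`-fork-convex combination of `P` with `Q` (relative to the
reference law `Γ`), described through its density process. -/
def IsFCC (Γ P Q : Measure (Seq d)) (s : ℕ) (h : Seq d → ℝ) (R : Measure (Seq d)) : Prop :=
  IsProbabilityMeasure P ∧ IsProbabilityMeasure Q ∧ LocAC d P Γ ∧ LocAC d Q Γ ∧
  Measurable[F d s] h ∧ (∀ ω, h ω ∈ Set.Icc (0 : ℝ) 1) ∧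
  Γ {ω | h ω < 1 ∧ Z d Q Γ s ω = 0} = 0 ∧
  IsProbabilityMeasure R ∧ LocAC d R Γ ∧
  ∀ t : ℕ, (fun ω => Z d R Γ t ω) =ᵐ[Γ]
    (fun ω => if t ≤ s then Z d P Γ t ω
      else h ω * Z d P Γ t ω + (1 - h ω) * Z d Q Γ t ω * (Z d P Γ s ω / Z d Q Γ s ω))

/-- A set of sequential laws is fork-convex if it is closed under fork-convex combinations. -/
def IsForkConvex (Γ : Measure (Seq d)) (S : Set (Measure (Seq d))) : Prop :=
  ∀ P ∈ S, ∀ Q ∈ S, ∀ (s : ℕ) (h : Seq d → ℝ) (R : Measure (Seq d)),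
    IsFCC d Γ P Q s h R → R ∈ S

/-- The fork-convex hull: the smallest fork-convex set containing `𝔓`. -/
def fconv (Γ : Measure (Seq d)) (𝔓 : Set (Measure (Seq d))) : Set (Measure (Seq d)) :=
  ⋂₀ {S | 𝔓 ⊆ S ∧ IsForkConvex d Γ S}

/-- Convergence of sequential laws: the density processes converge in `L¹(Γ)` at every fixed time. -/
def TendstoLocL1 (Γ : Measure (Seq d)) (Pn : ℕ → Measure (Seq d)) (P : Measure (Seq d)) : Prop :=
  ∀ t, Tendsto (fun n => ∫ ω, |Z d (Pn n) Γ t ω - Z d P Γ t ω| ∂Γ) atTop (nhds 0)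

/-- The closed fork-convex hull: the closure of the fork-convex hull under local `L¹(Γ)`
convergence of density processes. -/
def clfconv (Γ : Measure (Seq d)) (𝔓 : Set (Measure (Seq d))) : Set (Measure (Seq d)) :=
  {P | IsProbabilityMeasure P ∧ LocAC d P Γ ∧
    ∃ Pn : ℕ → Measure (Seq d), (∀ n, Pn n ∈ fconv d Γ 𝔓) ∧ TendstoLocL1 d Γ Pn P}

/-- `μ` is the law of an i.i.d. sequence with marginal `P`. -/
def IsIIDLaw (μ : Measure (Seq d)) (P : Measure (RV d)) : Prop :=
  IsProbabilityMeasure μ ∧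
    ∀ (t : ℕ) (A : Fin t → Set (RV d)), (∀ s, MeasurableSet (A s)) →
      prefixLaw d μ t (Set.univ.pi A) = ∏ s, P (A s)

/-- `μ` is the law of an independent sequence with marginals `Ps 0, Ps 1, …`. -/
def IsProductLaw (μ : Measure (Seq d)) (Ps : ℕ → Measure (RV d)) : Prop :=
  IsProbabilityMeasure μ ∧
    ∀ (t : ℕ) (A : Fin t → Set (RV d)), (∀ s, MeasurableSet (A s)) →
      prefixLaw d μ t (Set.univ.pi A) = ∏ s : Fin t, Ps s (A s)

/-- The set of i.i.d. sequential laws with marginals in `PP`. -/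
def iidLaws (PP : Set (Measure (RV d))) : Set (Measure (Seq d)) :=
  {μ | ∃ P ∈ PP, IsIIDLaw d μ P}

/-- The set of independent-product sequential laws with all marginals in `PP`. -/
def productLaws (PP : Set (Measure (RV d))) : Set (Measure (Seq d)) :=
  {μ | ∃ Ps : ℕ → Measure (RV d), (∀ t, Ps t ∈ PP) ∧ IsProductLaw d μ Ps}




/-- The density of the `d`-dimensional Gaussian with mean `m` and covariance matrix `S`. -/
def gaussDensityFn (m : RV d) (S : Matrix (Fin d) (Fin d) ℝ) (x : RV d) : ℝ :=
  (2 * Real.pi) ^ (-(d : ℝ) / 2) * S.det ^ (-(1 : ℝ) / 2) *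
    Real.exp (-(1 / 2) * ((x - m) ⬝ᵥ (S⁻¹ *ᵥ (x - m))))

/-- A finite mixture of nondegenerate Gaussian densities. -/
def IsGaussianMixture (g : RV d → ℝ) : Prop :=
  ∃ (k : ℕ) (α : Fin k → ℝ) (ms : Fin k → RV d) (Ss : Fin k → Matrix (Fin d) (Fin d) ℝ),
    (∀ i, 0 ≤ α i) ∧ (∑ i, α i = 1) ∧ (∀ i, (Ss i).PosDef) ∧
    g = fun x => ∑ i, α i * gaussDensityFn d (ms i) (Ss i) x

/-- A log-concave nonnegative function on `ℝ^d`. -/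
def IsLogConcaveFn (p : RV d → ℝ) : Prop :=
  (∀ x, 0 ≤ p x) ∧
    ∀ (x y : RV d) (l : ℝ), 0 ≤ l → l ≤ 1 →
      p x ^ l * p y ^ (1 - l) ≤ p (l • x + (1 - l) • y)

/-- A log-concave probability density on `ℝ^d`. -/
def IsLogConcaveDensity (p : RV d → ℝ) : Prop :=
  Measurable p ∧ IsLogConcaveFn d p ∧ ∫ x, p x = 1

/-- The set `𝓛` of laws on `ℝ^d` with a log-concave Lebesgue density. -/
def logConcaveLaws : Set (Measure (RV d)) :=
  {P | IsProbabilityMeasure P ∧ ∃ p : RV d → ℝ, Measurable p ∧ IsLogConcaveFn d p ∧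
    P = volume.withDensity fun x => ENNReal.ofReal (p x)}

/-- The set `𝒢` of nondegenerate Gaussian laws on `ℝ^d`. -/
def gaussianLaws : Set (Measure (RV d)) :=
  {P | ∃ (m : RV d) (S : Matrix (Fin d) (Fin d) ℝ), S.PosDef ∧
    P = volume.withDensity fun x => ENNReal.ofReal (gaussDensityFn d m S x)}

/-- An estimator sequence: a measurable family of (strictly positive) predictable
probability density estimates. -/
def IsEstimatorSeq (E : (t : ℕ) → (Fin t → RV d) → RV d → ℝ) : Prop :=
  (∀ t, Measurable fun q : (Fin t → RV d) × RV d => E t q.1 q.2) ∧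
  (∀ t h x, 0 < E t h x) ∧ (∀ t h, ∫ x, E t h x = 1)

/-- The universal likelihood ratio (ULR) process. Time `t` corresponds to having observed
the `t` samples `ω 0, …, ω (t-1)`. -/
def ULR (E : (t : ℕ) → (Fin t → RV d) → RV d → ℝ) (t : ℕ) (ω : Seq d) : ℝ :=
  if t ≤ d then 1 else
    (∏ j ∈ Finset.Ico d t, E j (fun i : Fin j => ω i) (ω j)) /
      ⨆ p : {p : RV d → ℝ // IsLogConcaveDensity d p}, ∏ j ∈ Finset.Ico d t, p.1 (ω j)

/-- The prediction (cumulative log-loss) regret of the estimator sequence `E` relative to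
the density of `P`. -/
def regret (P : Measure (RV d)) (E : (t : ℕ) → (Fin t → RV d) → RV d → ℝ)
    (t : ℕ) (ω : Seq d) : ℝ :=
  ∑ j ∈ Finset.range t,
    (Real.log ((P.rnDeriv volume (ω j)).toReal) - Real.log (E j (fun i : Fin j => ω i) (ω j)))

/-- The Hellinger distance between two laws on `ℝ^d` (via their Lebesgue densities). -/
def hellinger (P Q : Measure (RV d)) : ℝ :=
  Real.sqrt ((1 / 2) *
    ∫ x, (Real.sqrt ((P.rnDeriv volume x).toReal) - Real.sqrt ((Q.rnDeriv volume x).toReal)) ^ 2)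

/-- The Hellinger distance from `P` to the class of log-concave laws. -/
def dHLC (P : Measure (RV d)) : ℝ :=
  sInf {r | ∃ L ∈ logConcaveLaws d, r = hellinger d P L}

/-- The Kullback–Leibler divergence. -/
def klDivR {α : Type*} [MeasurableSpace α] (P Q : Measure α) : EReal :=
  if P ≪ Q ∧ Integrable (fun x => Real.log ((P.rnDeriv Q x).toReal)) P
  then ((∫ x, Real.log ((P.rnDeriv Q x).toReal) ∂P : ℝ) : EReal) else ⊤

/-- Membership in `𝒟₁`. -/
def MemD1 (P : Measure (RV d)) : Prop :=
  IsProbabilityMeasure P ∧ P ≪ volume ∧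
  Integrable (fun x => max 0 (Real.log ((P.rnDeriv volume x).toReal))) P ∧
  Integrable (fun x => Real.sqrt (∑ i, (x i) ^ 2)) P

/-- The log-likelihood gap `σ_t(P)` between the true density and the log-concave maximum
likelihood. -/
def sigmaT (P : Measure (RV d)) (t : ℕ) (ω : Seq d) : ℝ :=
  (∑ j ∈ Finset.range t, Real.log ((P.rnDeriv volume (ω j)).toReal)) -
    ⨆ p : {p : RV d → ℝ // IsLogConcaveDensity d p},
      ∑ j ∈ Finset.range t, Real.log (p.1 (ω j))

/-- The mean vector of `P`. -/
def meanVec (P : Measure (RV d)) : RV d := fun i => ∫ x, x i ∂P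

/-- `Δ_P = min_{‖v‖=1} E_P |⟨v, X − E_P X⟩|`. -/
def DeltaP (P : Measure (RV d)) : ℝ :=
  sInf {r | ∃ v : RV d, (∑ i, (v i) ^ 2) = 1 ∧
    r = ∫ x, |∑ i, v i * (x i - meanVec d P i)| ∂P}

/-- The class `𝒟_{Box,Lip,B}`: laws with a `1`-Lipschitz density supported on `[-1,1]^d`
taking values in `[1/B, B]` there. -/
def DBoxLip (B : ℝ) : Set (Measure (RV d)) :=
  {P | IsProbabilityMeasure P ∧ ∃ p : RV d → ℝ, Measurable p ∧
    P = volume.withDensity (fun x => ENNReal.ofReal (p x)) ∧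
    (∀ x, ¬ (∀ i, |x i| ≤ 1) → p x = 0) ∧
    (∀ x, (∀ i, |x i| ≤ 1) → 1 / B ≤ p x ∧ p x ≤ B) ∧
    (∀ x y, (∀ i, |x i| ≤ 1) → (∀ i, |y i| ≤ 1) →
      |p x - p y| ≤ Real.sqrt (∑ i, (x i - y i) ^ 2))}

section Mixture

open scoped ENNReal

variable {α : Type*}

/-- The mixture likelihood `∑ₖ 2⁻ᵏ⁻¹ ∏ᵢ qₖ(hᵢ)` of a finite sample `h`. -/
def mixLik (q : ℕ → α → ℝ≥0∞) {t : ℕ} (h : Fin t → α) : ℝ≥0∞ :=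
  ∑' k : ℕ, 2⁻¹ ^ (k + 1) * ∏ i, q k (h i)

/-- The mixture likelihood of the sample `h` followed by the observation `x`. -/
def mixLikSnoc (q : ℕ → α → ℝ≥0∞) {t : ℕ} (h : Fin t → α) (x : α) : ℝ≥0∞ :=
  ∑' k : ℕ, 2⁻¹ ^ (k + 1) * ((∏ i, q k (h i)) * q k x)

/-- The Bayesian predictive density of the mixture of the product laws with densities `qₖ`. -/
def mixPredict (q : ℕ → α → ℝ≥0∞) (t : ℕ) (h : Fin t → α) (x : α) : ℝ :=
  (mixLikSnoc q h x).toReal / (mixLik q h).toReal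

lemma tsum_inv_two_pow_succ : ∑' k : ℕ, (2⁻¹ : ℝ≥0∞) ^ (k + 1) = 1 := by
  rw [ENNReal.tsum_geometric_add_one, ENNReal.one_sub_inv_two, inv_inv,
    ENNReal.inv_mul_cancel (by simp) (by simp)]

lemma mixLik_zero (q : ℕ → α → ℝ≥0∞) (h : Fin 0 → α) : mixLik q h = 1 := by
  simp [mixLik, tsum_inv_two_pow_succ]

lemma mixLik_path_succ (q : ℕ → α → ℝ≥0∞) (ω : ℕ → α) (t : ℕ) :
    mixLik q (fun i : Fin (t + 1) => ω i) = mixLikSnoc q (fun i : Fin t => ω i) (ω t) := by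
  simp [mixLik, mixLikSnoc, Fin.prod_univ_castSucc]

lemma mixLik_ne_zero {q : ℕ → α → ℝ≥0∞} (hpos : ∀ k x, q k x ≠ 0) {t : ℕ} (h : Fin t → α) :
    mixLik q h ≠ 0 := by
  intro h0
  have := ENNReal.tsum_eq_zero.1 h0 0
  simp [Finset.prod_eq_zero_iff, hpos] at this

lemma mixLikSnoc_ne_zero {q : ℕ → α → ℝ≥0∞} (hpos : ∀ k x, q k x ≠ 0) {t : ℕ}
    (h : Fin t → α) (x : α) : mixLikSnoc q h x ≠ 0 := by
  intro h0
  have := ENNReal.tsum_eq_zero.1 h0 0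
  simp [Finset.prod_eq_zero_iff, hpos] at this

lemma mixLik_ne_top {q : ℕ → α → ℝ≥0∞} {C : ℝ≥0∞} (hC : C ≠ ∞) (hq : ∀ k x, q k x ≤ C) {t : ℕ}
    (h : Fin t → α) : mixLik q h ≠ ∞ := by
  refine ne_top_of_le_ne_top (ENNReal.pow_ne_top hC (n := t)) ?_
  calc mixLik q h ≤ ∑' k : ℕ, (2⁻¹ : ℝ≥0∞) ^ (k + 1) * C ^ t := by
        refine ENNReal.tsum_le_tsum fun k => ?_
        gcongr
        calc ∏ i, q k (h i) ≤ ∏ _i : Fin t, C := Finset.prod_le_prod' fun i _ => hq k _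
          _ = C ^ t := by simp
    _ = C ^ t := by rw [ENNReal.tsum_mul_right, tsum_inv_two_pow_succ, one_mul]

lemma mixLikSnoc_le {q : ℕ → α → ℝ≥0∞} {C : ℝ≥0∞} (hq : ∀ k x, q k x ≤ C) {t : ℕ}
    (h : Fin t → α) (x : α) : mixLikSnoc q h x ≤ mixLik q h * C := by
  rw [mixLik, ← ENNReal.tsum_mul_right]
  refine ENNReal.tsum_le_tsum fun k => ?_
  rw [← mul_assoc]
  gcongr
  exact hq k x

lemma mixLikSnoc_ne_top {q : ℕ → α → ℝ≥0∞} {C : ℝ≥0∞} (hC : C ≠ ∞) (hq : ∀ k x, q k x ≤ C)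
    {t : ℕ} (h : Fin t → α) (x : α) : mixLikSnoc q h x ≠ ∞ :=
  ne_top_of_le_ne_top (ENNReal.mul_ne_top (mixLik_ne_top hC hq h) hC) (mixLikSnoc_le hq h x)

/-- The log-losses of the mixture predictive densities telescope. -/
lemma sum_log_mixPredict {q : ℕ → α → ℝ≥0∞} {C : ℝ≥0∞} (hC : C ≠ ∞)
    (hq : ∀ k x, q k x ≤ C) (hpos : ∀ k x, q k x ≠ 0) (ω : ℕ → α) (t : ℕ) :
    ∑ j ∈ Finset.range t, Real.log (mixPredict q j (fun i : Fin j => ω i) (ω j)) =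
      Real.log (mixLik q (fun i : Fin t => ω i)).toReal := by
  have hne : ∀ s, (mixLik q (fun i : Fin s => ω i)).toReal ≠ 0 := fun s =>
    (ENNReal.toReal_pos (mixLik_ne_zero hpos _) (mixLik_ne_top hC hq _)).ne'
  simp_rw [mixPredict, ← mixLik_path_succ, Real.log_div (hne _) (hne _)]
  rw [Finset.sum_range_sub fun j => Real.log (mixLik q (fun i : Fin j => ω i)).toReal]
  simp [mixLik_zero]

/-- If `p ≤ e^ε qₖ`, the mixture loses at most `εt + (k + 1) log 2` against `p`. -/
lemma sum_log_le_log_mixLik {q : ℕ → α → ℝ≥0∞} {C : ℝ≥0∞} (hC : C ≠ ∞)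
    (hq : ∀ k x, q k x ≤ C) {p : α → ℝ≥0∞} {ε : ℝ} {k : ℕ}
    (hk : ∀ x, p x ≤ ENNReal.ofReal (Real.exp ε) * q k x) {ω : ℕ → α} (hω : ∀ j, p (ω j) ≠ 0)
    (t : ℕ) :
    ∑ j ∈ Finset.range t, Real.log (p (ω j)).toReal -
      Real.log (mixLik q (fun i : Fin t => ω i)).toReal ≤ (k + 1) * Real.log 2 + ε * t := by
  have hptop : ∀ x, p x ≠ ∞ := fun x => ne_top_of_le_ne_top
    (ENNReal.mul_ne_top ENNReal.ofReal_ne_top (ne_top_of_le_ne_top hC (hq k x))) (hk x)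
  have hppos : ∀ j, 0 < (p (ω j)).toReal := fun j => ENNReal.toReal_pos (hω j) (hptop _)
  have hmix := mixLik_ne_top hC hq (fun i : Fin t => ω i)
  have key : 2⁻¹ ^ (k + 1) * ∏ j ∈ Finset.range t, p (ω j) ≤
      ENNReal.ofReal (Real.exp ε) ^ t * mixLik q (fun i : Fin t => ω i) := by
    calc 2⁻¹ ^ (k + 1) * ∏ j ∈ Finset.range t, p (ω j)
        ≤ 2⁻¹ ^ (k + 1) * ∏ j ∈ Finset.range t, (ENNReal.ofReal (Real.exp ε) * q k (ω j)) := by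
          gcongr with j
          exact hk _
      _ = ENNReal.ofReal (Real.exp ε) ^ t *
          (2⁻¹ ^ (k + 1) * ∏ i : Fin t, q k (ω i)) := by
          rw [Finset.prod_mul_distrib, Finset.prod_const, Finset.card_range,
            Fin.prod_univ_eq_prod_range (fun i => q k (ω i)) t]
          ring
      _ ≤ _ := by
          gcongr
          exact ENNReal.le_tsum (f := fun k => 2⁻¹ ^ (k + 1) * ∏ i : Fin t, q k (ω i)) k
  have hreal := ENNReal.toReal_mono
    (ENNReal.mul_ne_top (ENNReal.pow_ne_top ENNReal.ofReal_ne_top) hmix) key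
  rw [ENNReal.toReal_mul, ENNReal.toReal_mul, ENNReal.toReal_pow, ENNReal.toReal_pow,
    ENNReal.toReal_ofReal (Real.exp_pos _).le, ENNReal.toReal_prod, ENNReal.toReal_inv,
    ENNReal.toReal_ofNat] at hreal
  have hprod : 0 < ∏ j ∈ Finset.range t, (p (ω j)).toReal :=
    Finset.prod_pos fun j _ => hppos j
  have hmixpos : 0 < (mixLik q (fun i : Fin t => ω i)).toReal :=
    pos_of_mul_pos_right (lt_of_lt_of_le (by positivity) hreal) (by positivity)
  have hlog := Real.log_le_log (by positivity) hreal
  rw [Real.log_mul (by positivity) hprod.ne', Real.log_mul (by positivity) hmixpos.ne',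
    Real.log_pow, Real.log_pow, Real.log_exp, Real.log_inv,
    Real.log_prod (fun j _ => (hppos j).ne')] at hlog
  push_cast at hlog
  linarith

/-- Mixture of the likelihood ratios of the product laws with densities `qₖ` against `p`. -/
def mixRatio (q : ℕ → α → ℝ≥0∞) (p : α → ℝ≥0∞) {t : ℕ} (h : Fin t → α) : ℝ≥0∞ :=
  mixLik (fun k x => q k x / p x) h

lemma mixLik_eq_mixRatio_mul (q : ℕ → α → ℝ≥0∞) {p : α → ℝ≥0∞} (hptop : ∀ x, p x ≠ ∞) {t : ℕ}
    {h : Fin t → α} (hp : ∀ i, p (h i) ≠ 0) :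
    mixLik q h = mixRatio q p h * ∏ i, p (h i) := by
  rw [mixRatio, mixLik, mixLik, ← ENNReal.tsum_mul_right]
  refine tsum_congr fun k => ?_
  rw [mul_assoc, ← Finset.prod_mul_distrib]
  simp_rw [ENNReal.div_mul_cancel (hp _) (hptop _)]

variable [MeasurableSpace α]

lemma measurable_mixLik {q : ℕ → α → ℝ≥0∞} (hm : ∀ k, Measurable (q k)) (t : ℕ) :
    Measurable fun h : Fin t → α => mixLik q h := by
  refine Measurable.tsum fun k => Measurable.const_mul ?_ _
  exact Finset.measurable_prod _ fun i _ => (hm k).comp (measurable_pi_apply i)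

lemma measurable_mixLikSnoc {q : ℕ → α → ℝ≥0∞} (hm : ∀ k, Measurable (q k)) (t : ℕ) :
    Measurable fun z : (Fin t → α) × α => mixLikSnoc q z.1 z.2 := by
  refine Measurable.tsum fun k => Measurable.const_mul (Measurable.mul ?_ ?_) _
  · exact Finset.measurable_prod _ fun i _ =>
      (hm k).comp ((measurable_pi_apply i).comp measurable_fst)
  · exact (hm k).comp measurable_snd

lemma lintegral_mixLikSnoc {ν : Measure α} {q : ℕ → α → ℝ≥0∞} (hm : ∀ k, Measurable (q k))
    (hint : ∀ k, ∫⁻ x, q k x ∂ν = 1) {t : ℕ} (h : Fin t → α) :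
    ∫⁻ x, mixLikSnoc q h x ∂ν = mixLik q h := by
  simp only [mixLikSnoc, mixLik]
  rw [lintegral_tsum fun k => (((hm k).const_mul _).const_mul _).aemeasurable]
  refine tsum_congr fun k => ?_
  rw [lintegral_const_mul _ ((hm k).const_mul _), lintegral_const_mul _ (hm k), hint, mul_one]

/-- Mixture predictive densities form an estimator sequence. -/
lemma isEstimatorSeq_mixPredict {d : ℕ} {q : ℕ → RV d → ℝ≥0∞} {C : ℝ≥0∞} (hC : C ≠ ∞)
    (hq : ∀ k x, q k x ≤ C) (hpos : ∀ k x, q k x ≠ 0) (hm : ∀ k, Measurable (q k))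
    (hint : ∀ k, ∫⁻ x, q k x = 1) : IsEstimatorSeq d (mixPredict q) := by
  refine ⟨fun t => ?_, fun t h x => ?_, fun t h => ?_⟩
  · exact (measurable_mixLikSnoc hm t).ennreal_toReal.div
      ((measurable_mixLik hm t).ennreal_toReal.comp measurable_fst)
  · exact div_pos (ENNReal.toReal_pos (mixLikSnoc_ne_zero hpos h x) (mixLikSnoc_ne_top hC hq h x))
      (ENNReal.toReal_pos (mixLik_ne_zero hpos h) (mixLik_ne_top hC hq h))
  · simp only [mixPredict]
    rw [integral_div, integral_toReal, lintegral_mixLikSnoc hm hint, div_self]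
    · exact (ENNReal.toReal_pos (mixLik_ne_zero hpos h) (mixLik_ne_top hC hq h)).ne'
    · exact ((measurable_mixLikSnoc hm t).comp measurable_prodMk_left).aemeasurable
    · exact ae_of_all _ fun x => (mixLikSnoc_ne_top hC hq h x).lt_top

lemma lintegral_mixRatio_le {ν : Measure α} {q : ℕ → α → ℝ≥0∞} (hm : ∀ k, Measurable (q k))
    (hint : ∀ k, ∫⁻ x, q k x ∂ν = 1) {p : α → ℝ≥0∞} (hp : Measurable p)
    [IsProbabilityMeasure (ν.withDensity p)] (t : ℕ) :
    ∫⁻ h : Fin t → α, mixRatio q p h ∂(Measure.pi fun _ => ν.withDensity p) ≤ 1 := by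
  have hmr : ∀ k, Measurable fun x => q k x / p x := fun k => (hm k).div hp
  have hprodm : ∀ k, Measurable fun h : Fin t → α => ∏ i, q k (h i) / p (h i) := fun k =>
    Finset.measurable_prod _ fun i _ => (hmr k).comp (measurable_pi_apply i)
  simp only [mixRatio, mixLik]
  rw [lintegral_tsum fun k => ((hprodm k).const_mul _).aemeasurable, ← tsum_inv_two_pow_succ]
  refine ENNReal.tsum_le_tsum fun k => ?_
  rw [lintegral_const_mul _ (hprodm k)]
  refine mul_le_of_le_one_right' ?_
  have hind : iIndepFun (fun (i : Fin t) (h : Fin t → α) => q k (h i) / p (h i))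
      (Measure.pi fun _ => ν.withDensity p) :=
    iIndepFun_pi (X := fun _ x => q k x / p x) fun _ => (hmr k).aemeasurable
  rw [lintegral_prod_eq_prod_lintegral_of_indepFun _ _ hind
    fun i => (hmr k).comp (measurable_pi_apply i)]
  refine Finset.prod_le_one' fun i _ => ?_
  rw [(measurePreserving_eval (fun _ : Fin t => ν.withDensity p) i).lintegral_comp (hmr k),
    lintegral_withDensity_eq_lintegral_mul _ hp (hmr k), ← hint k]
  exact lintegral_mono fun x => ENNReal.mul_div_le

end Mixture

lemma measurable_prefixMap (t : ℕ) : Measurable (prefixMap d t) :=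
  measurable_pi_lambda _ fun s => measurable_pi_apply (s : ℕ)

section IID

open scoped ENNReal

variable {d}

lemma IsIIDLaw.prefixLaw_eq {μ : Measure (Seq d)} {P : Measure (RV d)} [IsProbabilityMeasure P]
    (h : IsIIDLaw d μ P) (t : ℕ) : prefixLaw d μ t = Measure.pi fun _ => P :=
  (Measure.pi_eq (h.2 t)).symm

lemma IsIIDLaw.measurePreserving {μ : Measure (Seq d)} {P : Measure (RV d)}
    [IsProbabilityMeasure P] (h : IsIIDLaw d μ P) (j : ℕ) :
    MeasurePreserving (fun ω : Seq d => ω j) μ P :=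
  (measurePreserving_eval (fun _ : Fin (j + 1) => P) (Fin.last j)).comp
    ⟨measurable_prefixMap d (j + 1), h.prefixLaw_eq (j + 1)⟩

lemma tsum_inv_succ_sq_ne_top : ∑' t : ℕ, (((t : ℝ≥0∞) + 1) ^ 2)⁻¹ ≠ ∞ := by
  have hs : Summable fun t : ℕ => (((t : NNReal) + 1) ^ 2)⁻¹ := by
    rw [← NNReal.summable_coe]
    simpa using (summable_nat_add_iff 1).2 ((Real.summable_nat_pow_inv (p := 2)).2 one_lt_two)
  convert ENNReal.tsum_coe_ne_top_iff_summable.2 hs using 4 with t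
  rw [ENNReal.coe_inv (by positivity)]
  push_cast
  rfl

/-- Almost surely, the mixture likelihood ratio against the true density grows at most
quadratically in time. -/
lemma ae_exists_mixRatio_le {ν : Measure (RV d)} {q : ℕ → RV d → ℝ≥0∞}
    (hm : ∀ k, Measurable (q k)) (hint : ∀ k, ∫⁻ x, q k x ∂ν = 1) {p : RV d → ℝ≥0∞}
    (hp : Measurable p) [IsProbabilityMeasure (ν.withDensity p)] {μ : Measure (Seq d)}
    (hμ : IsIIDLaw d μ (ν.withDensity p)) :
    ∀ᵐ ω ∂μ, ∃ S : ℝ≥0∞, S ≠ ∞ ∧ ∀ t : ℕ,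
      mixRatio q p (fun i : Fin t => ω i) ≤ S * ((t : ℝ≥0∞) + 1) ^ 2 := by
  have hmR : ∀ t : ℕ, Measurable fun h : Fin t → RV d => mixRatio q p h := fun t =>
    measurable_mixLik (fun k => (hm k).div hp) t
  have hmω : ∀ t : ℕ, Measurable fun ω : Seq d => mixRatio q p (prefixMap d t ω) := fun t =>
    (hmR t).comp (measurable_prefixMap d t)
  have hmT : Measurable fun ω : Seq d =>
      ∑' t : ℕ, (((t : ℝ≥0∞) + 1) ^ 2)⁻¹ * mixRatio q p (prefixMap d t ω) :=
    Measurable.tsum fun t => (hmω t).const_mul _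
  have hfin : ∫⁻ ω, ∑' t : ℕ, (((t : ℝ≥0∞) + 1) ^ 2)⁻¹ * mixRatio q p (prefixMap d t ω) ∂μ
      ≠ ∞ := by
    rw [lintegral_tsum fun t => ((hmω t).const_mul _).aemeasurable]
    refine ne_top_of_le_ne_top tsum_inv_succ_sq_ne_top (ENNReal.tsum_le_tsum fun t => ?_)
    rw [lintegral_const_mul _ (hmω t)]
    refine mul_le_of_le_one_right' ?_
    rw [← lintegral_map (hmR t) (measurable_prefixMap d t)]
    exact (congrArg (fun m => ∫⁻ h, mixRatio q p h ∂m) (hμ.prefixLaw_eq t)).trans_le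
      (lintegral_mixRatio_le hm hint hp t)
  filter_upwards [ae_lt_top hmT hfin] with ω hω
  refine ⟨_, hω.ne, fun t => ?_⟩
  have hle := ENNReal.le_tsum
    (f := fun t : ℕ => (((t : ℝ≥0∞) + 1) ^ 2)⁻¹ * mixRatio q p (prefixMap d t ω)) t
  rw [mul_comm, ← div_eq_mul_inv] at hle
  exact (ENNReal.div_le_iff_le_mul (Or.inl (by simp)) (Or.inl (by finiteness))).1 hle

lemma log_mixLik_sub_le {q : ℕ → RV d → ℝ≥0∞} (hpos : ∀ k x, q k x ≠ 0) {p : RV d → ℝ≥0∞}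
    (hptop : ∀ x, p x ≠ ∞) {ω : Seq d} (hω : ∀ j, p (ω j) ≠ 0) {S : ℝ≥0∞} (hS : S ≠ ∞) {t : ℕ}
    (h : mixRatio q p (fun i : Fin t => ω i) ≤ S * ((t : ℝ≥0∞) + 1) ^ 2) :
    Real.log (mixLik q (fun i : Fin t => ω i)).toReal -
      ∑ j ∈ Finset.range t, Real.log (p (ω j)).toReal ≤
        Real.log S.toReal + 2 * Real.log ((t : ℝ) + 1) := by
  have hppos : ∀ j, 0 < (p (ω j)).toReal := fun j => ENNReal.toReal_pos (hω j) (hptop _)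
  have hprod : 0 < ∏ j ∈ Finset.range t, (p (ω j)).toReal :=
    Finset.prod_pos fun j _ => hppos j
  have hprodtop : ∏ j ∈ Finset.range t, p (ω j) ≠ ∞ :=
    ENNReal.prod_ne_top fun j _ => hptop _
  have key : mixLik q (fun i : Fin t => ω i) ≤
      S * ((t : ℝ≥0∞) + 1) ^ 2 * ∏ j ∈ Finset.range t, p (ω j) := by
    rw [mixLik_eq_mixRatio_mul q hptop fun i : Fin t => hω i,
      Fin.prod_univ_eq_prod_range (fun i => p (ω i)) t]
    gcongr
  have htop : S * ((t : ℝ≥0∞) + 1) ^ 2 * ∏ j ∈ Finset.range t, p (ω j) ≠ ∞ := by finiteness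
  have hmixpos : 0 < (mixLik q (fun i : Fin t => ω i)).toReal :=
    ENNReal.toReal_pos (mixLik_ne_zero hpos _) (ne_top_of_le_ne_top htop key)
  have hreal := ENNReal.toReal_mono htop key
  rw [ENNReal.toReal_mul, ENNReal.toReal_mul, ENNReal.toReal_pow, ENNReal.toReal_prod,
    ENNReal.toReal_add (by finiteness) (by finiteness), ENNReal.toReal_natCast,
    ENNReal.toReal_one] at hreal
  have hSpos : 0 < S.toReal := by
    by_contra hcon
    have h0 : S.toReal = 0 := le_antisymm (not_lt.1 hcon) ENNReal.toReal_nonneg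
    rw [h0] at hreal
    linarith
  have hlog := Real.log_le_log hmixpos hreal
  rw [Real.log_mul (by positivity) hprod.ne', Real.log_mul hSpos.ne' (by positivity),
    Real.log_pow, Real.log_prod (fun j _ => (hppos j).ne')] at hlog
  push_cast at hlog
  linarith

lemma tendsto_log_succ_div : Tendsto (fun t : ℕ => Real.log ((t : ℝ) + 1) / t) atTop (nhds 0) := by
  have h1 : Tendsto (fun t : ℕ => Real.log ((t : ℝ) + 1) / ((t : ℝ) + 1)) atTop (nhds 0) := by
    have := (Real.isLittleO_log_id_atTop.tendsto_div_nhds_zero).comp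
      ((tendsto_atTop_add_const_right _ (1 : ℝ) tendsto_natCast_atTop_atTop))
    simpa [Function.comp_def] using this
  have h2 := h1.add (h1.mul tendsto_inv_atTop_nhds_zero_nat)
  rw [mul_zero, add_zero] at h2
  refine h2.congr' ?_
  filter_upwards [eventually_gt_atTop 0] with t ht
  have : (0 : ℝ) < t := by exact_mod_cast ht
  field_simp

/-- If the true density is dominated by `e^ε qₖ` for some `k`, for every `ε > 0`, then the
mixture predictive densities have almost surely sublinear regret. -/
lemma ae_tendsto_regret_mixPredict {q : ℕ → RV d → ℝ≥0∞} {C : ℝ≥0∞} (hC : C ≠ ∞)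
    (hq : ∀ k x, q k x ≤ C) (hpos : ∀ k x, q k x ≠ 0) (hm : ∀ k, Measurable (q k))
    (hint : ∀ k, ∫⁻ x, q k x = 1) {P : Measure (RV d)} [IsProbabilityMeasure P]
    {p : RV d → ℝ≥0∞} (hp : Measurable p) (hP : P = volume.withDensity p)
    (happrox : ∀ ε : ℝ, 0 < ε → ∃ k, ∀ x, p x ≤ ENNReal.ofReal (Real.exp ε) * q k x)
    {μ : Measure (Seq d)} (hμ : IsIIDLaw d μ P) :
    ∀ᵐ ω ∂μ, Tendsto (fun t : ℕ => regret d P (mixPredict q) t ω / t) atTop (nhds 0) := by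
  have hptop : ∀ x, p x ≠ ∞ := fun x => by
    obtain ⟨k, hk⟩ := happrox 1 one_pos
    exact ne_top_of_le_ne_top
      (ENNReal.mul_ne_top ENNReal.ofReal_ne_top (ne_top_of_le_ne_top hC (hq k x))) (hk x)
  have hgood : ∀ᵐ x ∂P, P.rnDeriv volume x = p x ∧ p x ≠ 0 := by
    have h1 : ∀ᵐ x ∂P, P.rnDeriv volume x = p x := by
      have hac : P ≪ volume := hP ▸ withDensity_absolutelyContinuous _ _
      refine hac.ae_le ?_
      rw [hP]
      exact Measure.rnDeriv_withDensity volume hp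
    have h2 : ∀ᵐ x ∂P, p x ≠ 0 := by
      rw [hP, ae_withDensity_iff hp]
      exact ae_of_all _ fun x hx => hx
    exact h1.and h2
  have hpath : ∀ᵐ ω ∂μ, ∀ j : ℕ, P.rnDeriv volume (ω j) = p (ω j) ∧ p (ω j) ≠ 0 :=
    ae_all_iff.2 fun j => (hμ.measurePreserving j).quasiMeasurePreserving.ae hgood
  have hratio : ∀ᵐ ω ∂μ, ∃ S : ℝ≥0∞, S ≠ ∞ ∧ ∀ t : ℕ,
      mixRatio q p (fun i : Fin t => ω i) ≤ S * ((t : ℝ≥0∞) + 1) ^ 2 := by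
    subst hP
    exact ae_exists_mixRatio_le hm hint hp hμ
  filter_upwards [hpath, hratio] with ω hω hSω
  obtain ⟨S, hS, hSω⟩ := hSω
  have hreg : ∀ t, regret d P (mixPredict q) t ω =
      ∑ j ∈ Finset.range t, Real.log (p (ω j)).toReal -
        Real.log (mixLik q (fun i : Fin t => ω i)).toReal := fun t => by
    rw [regret, Finset.sum_sub_distrib, sum_log_mixPredict hC hq hpos]
    simp_rw [(hω _).1]
  rw [tendsto_order]
  constructor
  · intro a ha
    have hlim : Tendsto (fun t : ℕ => -(Real.log S.toReal / t + 2 * (Real.log ((t : ℝ) + 1) / t)))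
        atTop (nhds 0) := by
      simpa using ((tendsto_const_div_atTop_nhds_zero_nat (Real.log S.toReal)).add
        (tendsto_log_succ_div.const_mul 2)).neg
    filter_upwards [hlim.eventually (lt_mem_nhds ha), eventually_gt_atTop 0] with t hta ht
    have ht' : (0 : ℝ) < t := by exact_mod_cast ht
    refine hta.trans_le ?_
    rw [le_div_iff₀ ht', hreg]
    have := log_mixLik_sub_le hpos hptop (fun j => (hω j).2) hS (hSω t)
    field_simp
    linarith
  · intro a ha
    obtain ⟨k, hk⟩ := happrox (a / 2) (half_pos ha)
    have hlim := tendsto_const_div_atTop_nhds_zero_nat ((k + 1 : ℝ) * Real.log 2)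
    filter_upwards [hlim.eventually (gt_mem_nhds (half_pos ha)), eventually_gt_atTop 0]
      with t hta ht
    have ht' : (0 : ℝ) < t := by exact_mod_cast ht
    rw [div_lt_iff₀ ht'] at hta ⊢
    rw [hreg]
    have := sum_log_le_log_mixLik hC hq hk (fun j => (hω j).2) t
    linarith

end IID

section Box

open scoped ENNReal

variable {d}

/-- The continuous functions on a compact set with values in an interval admit a countable
uniformly dense family, extended by zero outside the compact set. -/
lemma exists_dense_seq_continuousOn {K : Set (RV d)} (hK : IsCompact K) {a b : ℝ} (hab : a ≤ b) :
    ∃ f : ℕ → RV d → ℝ, (∀ k, Measurable (f k)) ∧ (∀ k, ∀ x ∈ K, f k x ∈ Set.Icc a b) ∧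
      (∀ k, ∀ x ∉ K, f k x = 0) ∧
      ∀ p : RV d → ℝ, ContinuousOn p K → (∀ x ∈ K, p x ∈ Set.Icc a b) →
        ∀ δ : ℝ, 0 < δ → ∃ k, ∀ x ∈ K, |f k x - p x| ≤ δ := by
  have : CompactSpace K := isCompact_iff_compactSpace.1 hK
  let S : Set C(K, ℝ) := {f | ∀ x, f x ∈ Set.Icc a b}
  have : Nonempty S := ⟨⟨ContinuousMap.const K a, fun _ => ⟨le_rfl, hab⟩⟩⟩
  let g : ℕ → S := TopologicalSpace.denseSeq S
  let f : ℕ → RV d → ℝ := fun k => Function.extend Subtype.val (fun x : K => (g k).1 x) 0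
  have hf : ∀ k (x : RV d) (hx : x ∈ K), f k x = (g k).1 ⟨x, hx⟩ := fun k x hx =>
    Subtype.val_injective.extend_apply _ _ (⟨x, hx⟩ : K)
  refine ⟨f, fun k => ?_, fun k x hx => ?_, fun k x hx => ?_, fun p hp hpb δ hδ => ?_⟩
  · exact (MeasurableEmbedding.subtype_coe hK.measurableSet).measurable_extend
      (g k).1.continuous.measurable measurable_const
  · rw [hf k x hx]
    exact (g k).2 _
  · exact Function.extend_apply' _ _ _ fun ⟨y, hy⟩ => hx (hy ▸ y.2)
  · let P : S := ⟨⟨K.domRestrict p, hp.domRestrict⟩, fun x => hpb x x.2⟩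
    obtain ⟨k, hk⟩ := (TopologicalSpace.denseRange_denseSeq S).exists_dist_lt P hδ
    refine ⟨k, fun x hx => ?_⟩
    rw [hf k x hx, abs_sub_comm, ← Real.dist_eq]
    exact (ContinuousMap.dist_apply_le_dist (f := P.1) (g := (g k).1) ⟨x, hx⟩).trans hk.le

/-- There is a uniformly bounded sequence of positive probability densities which, up to a factor
`e^ε`, dominates every continuous probability density on a compact set with values in a given
compact interval of positive numbers. -/
lemma exists_dominating_densities {K : Set (RV d)} (hK : IsCompact K)
    (hvol : volume K ≠ 0) {a b : ℝ} (ha : 0 < a) (hab : a ≤ b) :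
    ∃ (q : ℕ → RV d → ℝ≥0∞) (C : ℝ≥0∞), C ≠ ∞ ∧ (∀ k x, q k x ≤ C) ∧ (∀ k x, q k x ≠ 0) ∧
      (∀ k, Measurable (q k)) ∧ (∀ k, ∫⁻ x, q k x = 1) ∧
      ∀ p : RV d → ℝ, ContinuousOn p K → (∀ x ∈ K, p x ∈ Set.Icc a b) → (∀ x ∉ K, p x = 0) →
        ∫⁻ x, ENNReal.ofReal (p x) = 1 →
        ∀ ε : ℝ, 0 < ε → ∃ k, ∀ x,
          ENNReal.ofReal (p x) ≤ ENNReal.ofReal (Real.exp ε) * q k x := by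
  obtain ⟨f, hfm, hfb, hf0, hfd⟩ := exists_dense_seq_continuousOn hK hab
  have hη : ∀ n : ℕ, ENNReal.ofReal (1 / ((n : ℝ) + 1)) ≠ 0 := fun n => by
    rw [Ne, ENNReal.ofReal_eq_zero, not_le]
    positivity
  choose g hgpos hgm hgint using fun n : ℕ =>
    exists_pos_lintegral_lt_of_sigmaFinite (volume : Measure (RV d)) (hη n)
  let u : ℕ → ℕ → RV d → ℝ≥0∞ := fun k n x => ENNReal.ofReal (f k x) + min 1 (g n x : ℝ≥0∞)
  let mass : ℕ → ℕ → ℝ≥0∞ := fun k n => ∫⁻ x, u k n x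
  have hKm := hK.measurableSet
  have hKtop : volume K ≠ ∞ := hK.measure_ne_top
  have hFm : ∀ k, Measurable fun x => ENNReal.ofReal (f k x) := fun k => (hfm k).ennreal_ofReal
  have hum : ∀ k n, Measurable (u k n) := fun k n =>
    (hFm k).add (measurable_const.min (hgm n).coe_nnreal_ennreal)
  have hFle : ∀ k x, ENNReal.ofReal (f k x) ≤ ENNReal.ofReal b := fun k x => by
    by_cases hx : x ∈ K
    · exact ENNReal.ofReal_le_ofReal (hfb k x hx).2
    · simp [hf0 k x hx]
  have hub : ∀ k n x, u k n x ≤ ENNReal.ofReal b + 1 := fun k n x =>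
    add_le_add (hFle k x) (min_le_left _ _)
  have hupos : ∀ k n x, u k n x ≠ 0 := fun k n x => by
    have : min 1 (g n x : ℝ≥0∞) ≠ 0 := (lt_min one_pos (by simpa using hgpos n x)).ne'
    simp only [u, ne_eq, add_eq_zero, not_and]
    exact fun _ => this
  have hZsplit : ∀ k n,
      mass k n ≤ (∫⁻ x, ENNReal.ofReal (f k x)) + ENNReal.ofReal (1 / ((n : ℝ) + 1)) := fun k n => by
    simp only [mass, u]
    rw [lintegral_add_left (hFm k)]
    gcongr
    exact (lintegral_mono fun x => min_le_right _ _).trans (hgint n).le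
  have hZlow : ∀ k n, ENNReal.ofReal a * volume K ≤ mass k n := fun k n => by
    rw [← setLIntegral_const]
    refine (setLIntegral_mono (hum k n) fun x hx => ?_).trans (setLIntegral_le_lintegral K _)
    exact (ENNReal.ofReal_le_ofReal (hfb k x hx).1).trans le_self_add
  have hlow0 : ENNReal.ofReal a * volume K ≠ 0 :=
    mul_ne_zero (by simpa using ha) hvol
  have hZ0 : ∀ k n, mass k n ≠ 0 := fun k n h =>
    hlow0 (le_antisymm (h ▸ hZlow k n) zero_le)
  have hZtop : ∀ k n, mass k n ≠ ∞ := fun k n => by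
    refine ne_top_of_le_ne_top ?_ (hZsplit k n)
    refine ENNReal.add_ne_top.2 ⟨?_, ENNReal.ofReal_ne_top⟩
    have hle : ∀ x, ENNReal.ofReal (f k x) ≤ K.indicator (fun _ => ENNReal.ofReal b) x := fun x => by
      by_cases hx : x ∈ K
      · simpa [hx] using hFle k x
      · simp [hf0 k x hx]
    refine ne_top_of_le_ne_top ?_ (lintegral_mono hle)
    rw [lintegral_indicator_const hKm]
    finiteness
  refine ⟨fun k x => u k.unpair.1 k.unpair.2 x / mass k.unpair.1 k.unpair.2,
    (ENNReal.ofReal b + 1) / (ENNReal.ofReal a * volume K),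
    ENNReal.div_ne_top (by finiteness) hlow0,
    fun k x => ENNReal.div_le_div (hub _ _ _) (hZlow _ _),
    fun k x => ENNReal.div_ne_zero.2 ⟨hupos _ _ _, hZtop _ _⟩,
    fun k => (hum _ _).div_const _, fun k => ?_, fun p hp hpb hp0 hpint ε hε => ?_⟩
  · simp_rw [div_eq_mul_inv]
    rw [lintegral_mul_const _ (hum _ _)]
    exact ENNReal.mul_inv_cancel (hZ0 _ _) (hZtop _ _)
  · set V : ℝ := (volume K).toReal with hV
    have hV0 : 0 ≤ V := ENNReal.toReal_nonneg
    set δ : ℝ := min (a * (ε / 2)) (ε / (4 * (V + 1))) with hδdef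
    have hδ : 0 < δ := by positivity
    obtain ⟨k, hk⟩ := hfd p hp hpb δ hδ
    obtain ⟨n, hn⟩ := exists_nat_one_div_lt (show (0 : ℝ) < ε / 4 by positivity)
    have hδV : δ * V ≤ ε / 4 := by
      calc δ * V ≤ ε / (4 * (V + 1)) * (V + 1) := by
            gcongr
            · exact min_le_right _ _
            · linarith
        _ = ε / 4 := by field_simp
    have hpf : ∀ x, ENNReal.ofReal (p x) ≤
        ENNReal.ofReal (Real.exp (ε / 2)) * ENNReal.ofReal (f k x) := fun x => by
      by_cases hx : x ∈ K
      · rw [← ENNReal.ofReal_mul (Real.exp_pos _).le]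
        refine ENNReal.ofReal_le_ofReal ?_
        have h1 := (abs_le.1 (hk x hx)).1
        have h2 := (hfb k x hx).1
        have h3 : δ ≤ a * (ε / 2) := min_le_left _ _
        have h4 := Real.add_one_le_exp (ε / 2)
        nlinarith
      · simp [hp0 x hx]
    have hZexp : mass k n ≤ ENNReal.ofReal (Real.exp (ε / 2)) := by
      have hfp : ∀ x, ENNReal.ofReal (f k x) ≤
          ENNReal.ofReal (p x) + K.indicator (fun _ => ENNReal.ofReal δ) x := fun x => by
        by_cases hx : x ∈ K
        · rw [Set.indicator_of_mem hx, ← ENNReal.ofReal_add (ha.le.trans (hpb x hx).1) hδ.le]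
          exact ENNReal.ofReal_le_ofReal (by linarith [(abs_le.1 (hk x hx)).2])
        · simp [hf0 k x hx]
      calc mass k n ≤ (∫⁻ x, ENNReal.ofReal (f k x)) + ENNReal.ofReal (1 / ((n : ℝ) + 1)) :=
            hZsplit k n
        _ ≤ (1 + ENNReal.ofReal δ * volume K) + ENNReal.ofReal (ε / 4) := by
            gcongr
            refine (lintegral_mono hfp).trans ?_
            rw [lintegral_add_right _ (measurable_const.indicator hKm), hpint,
              lintegral_indicator_const hKm]
        _ = ENNReal.ofReal (1 + δ * V + ε / 4) := by
            rw [ENNReal.ofReal_add (by positivity) (by positivity),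
              ENNReal.ofReal_add (by positivity) (by positivity), ENNReal.ofReal_mul hδ.le, hV,
              ENNReal.ofReal_toReal hKtop, ENNReal.ofReal_one]
        _ ≤ ENNReal.ofReal (Real.exp (ε / 2)) :=
            ENNReal.ofReal_le_ofReal (by linarith [Real.add_one_le_exp (ε / 2)])
    refine ⟨Nat.pair k n, fun x => ?_⟩
    simp only [Nat.unpair_pair]
    calc ENNReal.ofReal (p x) ≤ ENNReal.ofReal (Real.exp (ε / 2)) * ENNReal.ofReal (f k x) := hpf x
      _ ≤ ENNReal.ofReal (Real.exp (ε / 2)) * (mass k n * (u k n x / mass k n)) := by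
          rw [ENNReal.mul_div_cancel (hZ0 k n) (hZtop k n)]
          gcongr
          exact le_self_add
      _ ≤ ENNReal.ofReal (Real.exp (ε / 2)) *
          (ENNReal.ofReal (Real.exp (ε / 2)) * (u k n x / mass k n)) := by gcongr
      _ = ENNReal.ofReal (Real.exp ε) * (u k n x / mass k n) := by
          rw [← mul_assoc, ← ENNReal.ofReal_mul (Real.exp_pos _).le, ← Real.exp_add, add_halves]

lemma mem_Icc_neg_one_one_iff {x : RV d} : x ∈ Set.Icc (-1 : RV d) 1 ↔ ∀ i, |x i| ≤ 1 := by
  simp only [Set.mem_Icc, Pi.le_def, abs_le, Pi.neg_apply, Pi.one_apply]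
  exact forall_and.symm

lemma continuousOn_of_abs_sub_le_sqrt {p : RV d → ℝ} {K : Set (RV d)}
    (h : ∀ x ∈ K, ∀ y ∈ K, |p x - p y| ≤ Real.sqrt (∑ i, (x i - y i) ^ 2)) :
    ContinuousOn p K := by
  intro x hx
  rw [ContinuousWithinAt, tendsto_iff_dist_tendsto_zero]
  have hlim : Tendsto (fun y : RV d => Real.sqrt (∑ i, (y i - x i) ^ 2)) (nhdsWithin x K)
      (nhds 0) := by
    have hc : Continuous fun y : RV d => Real.sqrt (∑ i, (y i - x i) ^ 2) := by fun_prop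
    simpa using hc.continuousWithinAt (s := K) (x := x) |>.tendsto
  refine squeeze_zero' (Eventually.of_forall fun _ => dist_nonneg) ?_ hlim
  filter_upwards [self_mem_nhdsWithin] with y hy
  exact h y hy x hx

end Box

lemma limsup_div_mul_const_le {r : ℕ → ℝ} (h : Tendsto (fun t : ℕ => r t / t) atTop (nhds 0))
    (s : ℝ) {c : ℝ} (hc : 0 ≤ c) : limsup (fun t : ℕ => r t / (t * s)) atTop ≤ c := by
  have h' : Tendsto (fun t : ℕ => r t / (t * s)) atTop (nhds 0) := by
    simpa [div_div] using h.div_const s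
  exact h'.limsup_eq.trans_le hc

/-- For the box–Lipschitz–bounded class there is an estimator sequence with
a.s. sublinear prediction regret; consequently the class is well estimable at every level
`c > 0` relative to the log-concave KL-projection. -/
theorem statement19 (hd : 0 < d) (B : ℝ) (hB : 1 < B) :
    ∃ E : (t : ℕ) → (Fin t → RV d) → RV d → ℝ, IsEstimatorSeq d E ∧
      ∀ P ∈ DBoxLip d B, ∀ μ : Measure (Seq d), IsIIDLaw d μ P →
        (∀ᵐ ω ∂μ, Tendsto (fun t : ℕ => regret d P E t ω / t) atTop (nhds 0)) ∧
        (∀ c : ℝ, 0 < c → P ∉ logConcaveLaws d →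
          ∀ L ∈ logConcaveLaws d, (∀ L' ∈ logConcaveLaws d, klDivR P L ≤ klDivR P L') →
            ∀ᵐ ω ∂μ, Filter.limsup
              (fun t : ℕ => regret d P E t ω / (t * hellinger d P L ^ 2)) atTop ≤ c) := by
  obtain ⟨q, C, hC, hq, hpos, hm, hint, hdom⟩ := exists_dominating_densities (d := d)
    (K := Set.Icc (-1) 1) isCompact_Icc (by simp [Real.volume_Icc_pi])
    (a := 1 / B) (b := B) (by positivity) (((div_le_one (by positivity)).2 hB.le).trans hB.le)
  refine ⟨mixPredict q, isEstimatorSeq_mixPredict hC hq hpos hm hint, ?_⟩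
  rintro P ⟨hPprob, p, hpm, hP, hp0, hpb, hplip⟩ μ hμ
  have hpint : ∫⁻ x, ENNReal.ofReal (p x) = 1 := by
    rw [← setLIntegral_univ, ← withDensity_apply _ MeasurableSet.univ, ← hP, measure_univ]
  have hreg : ∀ᵐ ω ∂μ, Tendsto (fun t : ℕ => regret d P (mixPredict q) t ω / t) atTop (nhds 0) :=
    ae_tendsto_regret_mixPredict hC hq hpos hm hint hpm.ennreal_ofReal hP
      (hdom p
        (continuousOn_of_abs_sub_le_sqrt fun x hx y hy =>
          hplip x y (mem_Icc_neg_one_one_iff.1 hx) (mem_Icc_neg_one_one_iff.1 hy))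
        (fun x hx => hpb x (mem_Icc_neg_one_one_iff.1 hx))
        (fun x hx => hp0 x fun h => hx (mem_Icc_neg_one_one_iff.2 h)) hpint) hμ
  refine ⟨hreg, fun c hc _ L _ _ => ?_⟩
  filter_upwards [hreg] with ω hω
  exact limsup_div_mul_const_le hω _ hc.le

end SeqTest
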